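/- Let 0 < β ≤ 1/4 and let δ > 0 satisfy 2δ·|1−2β| < 1 and δ² < 6. Set τ := 1 − 2β, η := |τ|·(1 + δ|τ| + (2/3)·δ²|τ|² − δ²|τ|²·log(1 − 2δ|τ|)), and ξ := 2β − η·(1 + 2βδ + (4β²/3)·δ² + δ²/6 + δ³/(6−δ²)). Then ξ ≤ 0. In particular, the feasibility condition ξ > 0 required by the convergence theorem for the backward iteration can never be satisfied when β ≤ 1/4. -/

import Mathlib

theorem xi_nonpos_of_beta_le_quarter (β δ τ η ξ : ℝ)
    (hβ0 : 0 < β) (hβ : β ≤ 1 / 4) (hδ : 0 < δ)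
    (hδτ : 2 * δ * |1 - 2 * β| < 1) (hδ6 : δ ^ 2 < 6)
    (hτ : τ = 1 - 2 * β)
    (hη : η = |τ| * (1 + δ * |τ| + (2 / 3) * δ ^ 2 * |τ| ^ 2 -
      δ ^ 2 * |τ| ^ 2 * Real.log (1 - 2 * δ * |τ|)))
    (hξ : ξ = 2 * β - η * (1 + 2 * β * δ + (4 * β ^ 2 / 3) * δ ^ 2 +
      δ ^ 2 / 6 + δ ^ 3 / (6 - δ ^ 2))) :
    ξ ≤ 0 := by
  rw [← hτ] at hδτ
  have hτ2 : 2 * β ≤ |τ| := by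
    have := le_abs_self τ
    linarith
  have ht : 0 ≤ |τ| := abs_nonneg τ
  have hlog : Real.log (1 - 2 * δ * |τ|) ≤ 0 := by
    apply Real.log_nonpos
    · linarith
    · have : 0 ≤ 2 * δ * |τ| := by positivity
      linarith
  have h1 : 0 ≤ δ * |τ| := by positivity
  have h2 : 0 ≤ (2 / 3) * δ ^ 2 * |τ| ^ 2 := by positivity
  have h3 : δ ^ 2 * |τ| ^ 2 * Real.log (1 - 2 * δ * |τ|) ≤ 0 :=
    mul_nonpos_of_nonneg_of_nonpos (by positivity) hlog
  have hη1 : |τ| ≤ η := by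
    rw [hη]
    exact le_mul_of_one_le_right ht (by linarith)
  have h6 : 0 < 6 - δ ^ 2 := by linarith
  have h4 : 0 ≤ 2 * β * δ + (4 * β ^ 2 / 3) * δ ^ 2 + δ ^ 2 / 6 + δ ^ 3 / (6 - δ ^ 2) := by
    positivity
  have h5 : η ≤ η * (1 + 2 * β * δ + (4 * β ^ 2 / 3) * δ ^ 2 +
      δ ^ 2 / 6 + δ ^ 3 / (6 - δ ^ 2)) :=
    le_mul_of_one_le_right (ht.trans hη1) (by linarith)
  linarith
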